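/- Let Ω be a convex body in ℝ^m (a compact convex set with nonempty interior). For each fixed t > 0, the function x ↦ W_Ω(x,t) is positive on ℝ^m and strictly log-concave on ℝ^m; that is, for all x₁ ≠ x₂ in ℝ^m and all 0 < λ < 1, W_Ω((1−λ)x₁ + λx₂, t) > W_Ω(x₁,t)^{1−λ} · W_Ω(x₂,t)^{λ}. -/

import Mathlib

open MeasureTheory Metric Set

noncomputable section

/-- Weierstrass' (heat) kernel on `ℝ^m`. -/
def heatKernel (m : ℕ) (z : EuclideanSpace ℝ (Fin m)) (t : ℝ) : ℝ :=
  (4 * Real.pi * t) ^ (-(m : ℝ) / 2) * Real.exp (-‖z‖ ^ 2 / (4 * t))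

/-!
Brunn–Minkowski on the line, applied to superlevel sets of functions normalised to supremum `1`,
gives the Prékopa–Leindler inequality for Lebesgue measure on `ℝ`. The inequality passes to
products, hence to `ℝ^m`, and to restrictions to convex sets. Since `(x, y) ↦ w(x - y, t)` is
log-concave, Prékopa's marginal argument shows that `log W(·, t)` is concave.

Along a line, completing the square writes `W` as a Gaussian times a moment generating function, so
`log W` is real analytic there. Its derivative is antitone and analytic, so if it takes the same
value at two points it is constant, by the identity theorem. As `W → 0` at infinity, `log W → -∞` at
both ends of the line, which rules out a constant derivative and makes the concavity strict.
-/

open Filter Bornology ProbabilityTheory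
open scoped ENNReal Pointwise Topology

/-- The Prékopa–Leindler inequality for `μ` with all weights `a, b > 0`, `a + b = 1`:
the functional form of log-concavity of a measure. -/
def PrekopaLeindler {E : Type*} [AddCommGroup E] [Module ℝ E] [MeasurableSpace E]
    (μ : Measure E) : Prop :=
  ∀ ⦃a b : ℝ⦄, 0 < a → 0 < b → a + b = 1 → ∀ ⦃f g h : E → ℝ≥0∞⦄,
    Measurable f → Measurable g → Measurable h →
    (∀ x y, f x ^ a * g y ^ b ≤ h (a • x + b • y)) →
    (∫⁻ x, f x ∂μ) ^ a * (∫⁻ y, g y ∂μ) ^ b ≤ ∫⁻ z, h z ∂μ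

section Line

theorem volume_add_volume_le_of_isCompact {K L : Set ℝ} (hK : IsCompact K) (hL : IsCompact L)
    (hK₀ : K.Nonempty) (hL₀ : L.Nonempty) : volume K + volume L ≤ volume (K + L) := by
  obtain ⟨k, hkK, hk⟩ := hK.exists_isGreatest hK₀
  obtain ⟨l, hlL, hl⟩ := hL.exists_isLeast hL₀
  have hdisj : AEDisjoint volume (l +ᵥ K) (k +ᵥ L) := by
    refine measure_mono_null (t := {k + l}) ?_ (measure_singleton _)
    rintro _ ⟨⟨x, hx, rfl⟩, y, hy, hxy⟩
    have hxk : x ≤ k := hk hx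
    have hly : l ≤ y := hl hy
    simp only [vadd_eq_add, mem_singleton_iff] at hxy ⊢
    linarith
  calc
    volume K + volume L = volume (l +ᵥ K) + volume (k +ᵥ L) := by simp only [measure_vadd]
    _ = volume ((l +ᵥ K) ∪ (k +ᵥ L)) :=
      (measure_union₀ (hL.vadd k).measurableSet.nullMeasurableSet hdisj).symm
    _ ≤ volume (K + L) := by
      refine measure_mono (union_subset ?_ (vadd_set_subset_add hkK))
      rw [add_comm K L]
      exact vadd_set_subset_add hlL

theorem volume_add_volume_le {A B : Set ℝ} (hA : MeasurableSet A) (hB : MeasurableSet B)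
    (hA₀ : A.Nonempty) (hB₀ : B.Nonempty) : volume A + volume B ≤ volume (A + B) := by
  obtain ⟨x, hx⟩ := hA₀
  obtain ⟨y, hy⟩ := hB₀
  rw [hA.measure_eq_iSup_isCompact, hB.measure_eq_iSup_isCompact]
  simp only [iSup_and']
  refine ENNReal.biSup_add_biSup_le' ⟨∅, by simp⟩ ⟨∅, by simp⟩ ?_
  rintro K ⟨hKA, hK⟩ L ⟨hLB, hL⟩
  calc
    volume K + volume L ≤ volume (insert x K) + volume (insert y L) := by
      gcongr <;> exact subset_insert _ _
    _ ≤ volume (insert x K + insert y L) :=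
      volume_add_volume_le_of_isCompact (hK.insert x) (hL.insert y) (insert_nonempty _ _)
        (insert_nonempty _ _)
    _ ≤ volume (A + B) :=
      measure_mono (add_subset_add (insert_subset hx hKA) (insert_subset hy hLB))

theorem ofReal_mul_volume_add_ofReal_mul_volume_le {a b : ℝ} (ha : 0 < a) (hb : 0 < b)
    {A B : Set ℝ} (hA : MeasurableSet A) (hB : MeasurableSet B) (hA₀ : A.Nonempty)
    (hB₀ : B.Nonempty) :
    ENNReal.ofReal a * volume A + ENNReal.ofReal b * volume B ≤ volume (a • A + b • B) := by
  simpa [Measure.addHaar_smul, abs_of_pos, ha, hb] using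
    volume_add_volume_le (hA.const_smul₀ a) (hB.const_smul₀ b) hA₀.smul_set hB₀.smul_set

theorem volume_Ioi_zero_inter_ofReal_lt (c : ℝ≥0∞) :
    volume (Ioi 0 ∩ {t : ℝ | ENNReal.ofReal t < c}) = c := by
  induction c with
  | top => simp
  | coe c =>
    have : Ioi 0 ∩ {t : ℝ | ENNReal.ofReal t < c} = Ioo 0 (c : ℝ) := by
      ext t
      simp +contextual [ENNReal.ofReal_lt_coe_iff, le_of_lt]
    simp [this]

theorem lintegral_eq_lintegral_Ioi_measure_ofReal_lt {α : Type*} [MeasurableSpace α]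
    (μ : Measure α) [SFinite μ] {f : α → ℝ≥0∞} (hf : Measurable f) :
    ∫⁻ x, f x ∂μ = ∫⁻ t in Ioi (0 : ℝ), μ {x | ENNReal.ofReal t < f x} := by
  have hmeas : MeasurableSet {p : ℝ × α | ENNReal.ofReal p.1 < f p.2} :=
    measurableSet_lt (by fun_prop) (by fun_prop)
  calc
    ∫⁻ x, f x ∂μ = ∫⁻ x, volume.restrict (Ioi 0) {t : ℝ | ENNReal.ofReal t < f x} ∂μ := by
      refine lintegral_congr fun x ↦ ?_
      rw [Measure.restrict_apply (measurableSet_lt (by fun_prop) measurable_const), inter_comm,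
        volume_Ioi_zero_inter_ofReal_lt]
    _ = ∫⁻ t in Ioi (0 : ℝ), μ {x | ENNReal.ofReal t < f x} :=
      (Measure.prod_apply_symm hmeas).symm.trans (Measure.prod_apply hmeas)

variable {a b : ℝ}

theorem rpow_mul_rpow_le_ofReal_mul_add_ofReal_mul (ha : 0 < a) (hb : 0 < b)
    (hab : a + b = 1) (x y : ℝ≥0∞) :
    x ^ a * y ^ b ≤ ENNReal.ofReal a * x + ENNReal.ofReal b * y := by
  induction x with
  | top => simp [ENNReal.mul_top, ha]
  | coe x =>
    induction y with
    | top => simp [ENNReal.mul_top, hb]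
    | coe y =>
      have h := NNReal.geom_mean_le_arith_mean2_weighted a.toNNReal b.toNNReal x y
        (by rw [← Real.toNNReal_add ha.le hb.le, hab, Real.toNNReal_one])
      rw [Real.coe_toNNReal _ ha.le, Real.coe_toNNReal _ hb.le] at h
      rw [← ENNReal.coe_rpow_of_nonneg _ ha.le, ← ENNReal.coe_rpow_of_nonneg _ hb.le,
        ENNReal.ofReal, ENNReal.ofReal]
      exact_mod_cast h

variable {f g h : ℝ → ℝ≥0∞}

theorem ofReal_mul_lintegral_add_ofReal_mul_lintegral_le (ha : 0 < a) (hb : 0 < b)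
    (hab : a + b = 1) (hf : Measurable f) (hg : Measurable g) (hh : Measurable h)
    (hf₁ : ⨆ x, f x = 1) (hg₁ : ⨆ y, g y = 1)
    (H : ∀ x y, f x ^ a * g y ^ b ≤ h (a • x + b • y)) :
    ENNReal.ofReal a * (∫⁻ x, f x) + ENNReal.ofReal b * (∫⁻ y, g y) ≤ ∫⁻ z, h z := by
  simp only [lintegral_eq_lintegral_Ioi_measure_ofReal_lt volume, hf, hg, hh]
  rw [← lintegral_const_mul' _ _ ENNReal.ofReal_ne_top,
    ← lintegral_const_mul' _ _ ENNReal.ofReal_ne_top]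
  refine (le_lintegral_add _ _).trans (lintegral_mono fun t ↦ ?_)
  set s := ENNReal.ofReal t
  rcases lt_or_ge s 1 with hs | hs
  · have hfs : {x | s < f x}.Nonempty := by
      simpa [Set.Nonempty, ← lt_iSup_iff, hf₁] using hs
    have hgs : {y | s < g y}.Nonempty := by
      simpa [Set.Nonempty, ← lt_iSup_iff, hg₁] using hs
    have hsub : a • {x | s < f x} + b • {y | s < g y} ⊆ {z | s < h z} := by
      rintro _ ⟨_, ⟨x, hx, rfl⟩, _, ⟨y, hy, rfl⟩, rfl⟩
      calc
        s = s ^ a * s ^ b := by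
          rw [← ENNReal.rpow_add_of_nonneg _ _ ha.le hb.le, hab, ENNReal.rpow_one]
        _ < f x ^ a * g y ^ b :=
          ENNReal.mul_lt_mul (ENNReal.rpow_lt_rpow hx ha) (ENNReal.rpow_lt_rpow hy hb)
        _ ≤ h (a • x + b • y) := H x y
    exact (ofReal_mul_volume_add_ofReal_mul_volume_le ha hb (measurableSet_lt measurable_const hf)
      (measurableSet_lt measurable_const hg) hfs hgs).trans (measure_mono hsub)
  · have hfs : {x | s < f x} = ∅ :=
      eq_empty_of_forall_notMem fun x ↦ ((le_iSup f x).trans (hf₁.trans_le hs)).not_gt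
    have hgs : {y | s < g y} = ∅ :=
      eq_empty_of_forall_notMem fun y ↦ ((le_iSup g y).trans (hg₁.trans_le hs)).not_gt
    simp [hfs, hgs]

theorem lintegral_rpow_mul_lintegral_rpow_le_of_iSup_ne_top (ha : 0 < a) (hb : 0 < b)
    (hab : a + b = 1) (hf : Measurable f) (hg : Measurable g) (hh : Measurable h)
    (hf_top : ⨆ x, f x ≠ ∞) (hg_top : ⨆ y, g y ≠ ∞)
    (H : ∀ x y, f x ^ a * g y ^ b ≤ h (a • x + b • y)) :
    (∫⁻ x, f x) ^ a * (∫⁻ y, g y) ^ b ≤ ∫⁻ z, h z := by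
  set A := ⨆ x, f x with hA
  set B := ⨆ y, g y with hB
  rcases eq_or_ne A 0 with hA₀ | hA₀
  · simp [ENNReal.iSup_eq_zero.1 hA₀, ha]
  rcases eq_or_ne B 0 with hB₀ | hB₀
  · simp [ENNReal.iSup_eq_zero.1 hB₀, hb]
  set C := A ^ a * B ^ b with hC
  have hC₀ : C ≠ 0 := by simp [hC, hA₀, hB₀, hf_top, hg_top]
  have hC_top : C ≠ ∞ := by finiteness
  have hdiv (u v : ℝ≥0∞) : (u / A) ^ a * (v / B) ^ b = u ^ a * v ^ b / C := by
    rw [ENNReal.div_rpow_of_nonneg _ _ ha.le, ENNReal.div_rpow_of_nonneg _ _ hb.le,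
      ENNReal.mul_div_mul_comm (by simp [hA₀, hf_top]) (by simp [hB₀, hg_top])]
  have hnorm := ofReal_mul_lintegral_add_ofReal_mul_lintegral_le (f := fun x ↦ f x / A)
    (g := fun y ↦ g y / B) (h := fun z ↦ h z / C) ha hb hab (by fun_prop) (by fun_prop)
    (by fun_prop) (by rw [← ENNReal.iSup_div, ← hA, ENNReal.div_self hA₀ hf_top])
    (by rw [← ENNReal.iSup_div, ← hB, ENNReal.div_self hB₀ hg_top])
    (fun x y ↦ by rw [hdiv]; gcongr; exact H x y)
  simp only [div_eq_mul_inv, lintegral_mul_const, hf, hg, hh] at hnorm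
  simp only [← div_eq_mul_inv] at hnorm
  have hgeom : (∫⁻ x, f x) ^ a * (∫⁻ y, g y) ^ b / C ≤ (∫⁻ z, h z) / C :=
    (hdiv _ _).ge.trans
      ((rpow_mul_rpow_le_ofReal_mul_add_ofReal_mul ha hb hab _ _).trans hnorm)
  simpa [ENNReal.div_le_iff hC₀ hC_top, ENNReal.div_mul_cancel hC₀ hC_top] using hgeom

theorem tendsto_lintegral_min_natCast {α : Type*} [MeasurableSpace α] (μ : Measure α)
    {f : α → ℝ≥0∞} (hf : Measurable f) :
    Tendsto (fun n : ℕ ↦ ∫⁻ x, min (f x) n ∂μ) atTop (𝓝 (∫⁻ x, f x ∂μ)) := by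
  refine lintegral_tendsto_of_tendsto_of_monotone (fun n ↦ by fun_prop)
    (ae_of_all _ fun x m n hmn ↦ min_le_min_left _ (by gcongr)) (ae_of_all _ fun x ↦ ?_)
  simpa using (tendsto_const_nhds (x := f x)).min ENNReal.tendsto_nat_nhds_top

theorem prekopaLeindler_volume_real : PrekopaLeindler (volume : Measure ℝ) := by
  intro a b ha hb hab f g h hf hg hh H
  rcases eq_or_ne (∫⁻ x, f x) 0 with hf₀ | hf₀
  · simp [hf₀, ha]
  rcases eq_or_ne (∫⁻ y, g y) 0 with hg₀ | hg₀
  · simp [hg₀, hb]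
  have hbdd (u : ℝ → ℝ≥0∞) (n : ℕ) : ⨆ x, min (u x) n ≠ ∞ :=
    ne_top_of_le_ne_top (ENNReal.natCast_ne_top n) (iSup_le fun x ↦ min_le_right _ _)
  have htrunc (n : ℕ) :
      (∫⁻ x, min (f x) n) ^ a * (∫⁻ y, min (g y) n) ^ b ≤ ∫⁻ z, h z := by
    refine lintegral_rpow_mul_lintegral_rpow_le_of_iSup_ne_top ha hb hab (by fun_prop)
      (by fun_prop) hh (hbdd f n) (hbdd g n) fun x y ↦ le_trans ?_ (H x y)
    gcongr <;> exact min_le_left _ _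
  refine le_of_tendsto' (ENNReal.Tendsto.mul ((tendsto_lintegral_min_natCast _ hf).ennrpow_const a)
    (.inl ?_) ((tendsto_lintegral_min_natCast _ hg).ennrpow_const b) (.inl ?_)) htrunc
  · simp [hf₀, ha.not_gt]
  · simp [hg₀, hb.not_gt]

end Line

namespace PrekopaLeindler

section Operations

variable {E F : Type*} [AddCommGroup E] [Module ℝ E] [MeasurableSpace E]
  [AddCommGroup F] [Module ℝ F] [MeasurableSpace F] {μ : Measure E} {ν : Measure F}

protected theorem prod [SFinite ν] (hμ : PrekopaLeindler μ)
    (hν : PrekopaLeindler ν) : PrekopaLeindler (μ.prod ν) := by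
  intro a b ha hb hab f g h hf hg hh H
  simp only [lintegral_prod, hf.aemeasurable, hg.aemeasurable, hh.aemeasurable]
  exact hμ ha hb hab hf.lintegral_prod_right' hg.lintegral_prod_right' hh.lintegral_prod_right'
    fun x y ↦ hν ha hb hab (by fun_prop) (by fun_prop) (by fun_prop)
      fun x' y' ↦ H (x, x') (y, y')

theorem of_measurePreserving (hμ : PrekopaLeindler μ) {T : E → F} (hT : MeasurePreserving T μ ν)
    (hlin : IsLinearMap ℝ T) : PrekopaLeindler ν := by
  intro a b ha hb hab f g h hf hg hh H
  rw [← hT.lintegral_comp hf, ← hT.lintegral_comp hg, ← hT.lintegral_comp hh]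
  refine hμ ha hb hab (hf.comp hT.measurable) (hg.comp hT.measurable) (hh.comp hT.measurable)
    fun x y ↦ ?_
  rw [hlin.map_add, hlin.map_smul, hlin.map_smul]
  exact H _ _

protected theorem restrict (hμ : PrekopaLeindler μ) {s : Set E} (hs : Convex ℝ s)
    (hs_meas : MeasurableSet s) : PrekopaLeindler (μ.restrict s) := by
  intro a b ha hb hab f g h hf hg hh H
  simp only [← lintegral_indicator hs_meas]
  refine hμ ha hb hab (hf.indicator hs_meas) (hg.indicator hs_meas) (hh.indicator hs_meas)
    fun x y ↦ ?_
  by_cases hx : x ∈ s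
  · by_cases hy : y ∈ s
    · simpa only [indicator_of_mem, hx, hy, hs hx hy ha.le hb.le hab] using H x y
    · simp [hy, hb]
  · simp [hx, ha]

end Operations

protected theorem pi : ∀ {n : ℕ} {E : Fin n → Type*} [∀ i, AddCommGroup (E i)]
    [∀ i, Module ℝ (E i)] [∀ i, MeasurableSpace (E i)] {μ : ∀ i, Measure (E i)}
    [∀ i, SigmaFinite (μ i)], (∀ i, PrekopaLeindler (μ i)) → PrekopaLeindler (Measure.pi μ)
  | 0, _, _, _, _, μ, _, _ => by
    intro a b _ _ _ f g h hf hg hh H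
    rw [Measure.pi_of_empty μ 0]
    simpa [lintegral_dirac', hf, hg, hh] using H 0 0
  | n + 1, E, _, _, _, μ, _, hμ => by
    have hcons : ⇑(MeasurableEquiv.piFinSuccAbove E 0).symm = Fin.consLinearEquiv ℝ E :=
      congrArg DFunLike.coe (Fin.insertNthEquiv_zero E)
    refine ((hμ 0).prod (PrekopaLeindler.pi fun i ↦ hμ i.succ)).of_measurePreserving
      (measurePreserving_piFinSuccAbove μ 0).symm ?_
    rw [hcons]
    exact (Fin.consLinearEquiv ℝ E).toLinearMap.isLinear

end PrekopaLeindler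

theorem prekopaLeindler_volume_euclideanSpace (n : ℕ) :
    PrekopaLeindler (volume : Measure (EuclideanSpace ℝ (Fin n))) :=
  (PrekopaLeindler.pi fun _ ↦ prekopaLeindler_volume_real).of_measurePreserving
    (PiLp.volume_preserving_toLp (Fin n))
    (WithLp.linearEquiv 2 ℝ (Fin n → ℝ)).symm.toLinearMap.isLinear

theorem log_rpow_mul_rpow {u v : ℝ} (hu : 0 < u) (hv : 0 < v) (a b : ℝ) :
    Real.log (u ^ a * v ^ b) = a * Real.log u + b * Real.log v := by
  rw [Real.log_mul (Real.rpow_pos_of_pos hu a).ne' (Real.rpow_pos_of_pos hv b).ne',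
    Real.log_rpow hu, Real.log_rpow hv]

theorem integral_pos_of_forall_pos {α : Type*} [MeasurableSpace α] {μ : Measure α} [NeZero μ]
    {f : α → ℝ} (hf : ∀ x, 0 < f x) (hf_int : Integrable f μ) : 0 < ∫ x, f x ∂μ := by
  have hsupp : f.support = univ := eq_univ_of_forall fun x ↦ (hf x).ne'
  rw [integral_pos_iff_support_of_nonneg (fun x ↦ (hf x).le) hf_int, hsupp]
  exact NeZero.pos _

theorem PrekopaLeindler.concaveOn_log_integral {E F : Type*} [AddCommGroup E] [Module ℝ E]
    [MeasurableSpace E] [AddCommGroup F] [Module ℝ F] {μ : Measure E} [NeZero μ]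
    (hμ : PrekopaLeindler μ) {Φ : F → E → ℝ} (hpos : ∀ x y, 0 < Φ x y)
    (hmeas : ∀ x, Measurable (Φ x)) (hint : ∀ x, Integrable (Φ x) μ)
    (hlog : ConcaveOn ℝ univ fun p : F × E ↦ Real.log (Φ p.1 p.2)) :
    ConcaveOn ℝ univ fun x ↦ Real.log (∫ y, Φ x y ∂μ) := by
  have hIpos (x : F) : 0 < ∫ y, Φ x y ∂μ := integral_pos_of_forall_pos (hpos x) (hint x)
  have hI (x : F) : ENNReal.ofReal (∫ y, Φ x y ∂μ) = ∫⁻ y, ENNReal.ofReal (Φ x y) ∂μ :=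
    ofReal_integral_eq_lintegral_ofReal (hint x) (ae_of_all _ fun y ↦ (hpos x y).le)
  refine concaveOn_iff_forall_pos.2 ⟨convex_univ, fun x₁ _ x₂ _ a b ha hb hab ↦ ?_⟩
  have hΦ (y₁ y₂ : E) :
      Φ x₁ y₁ ^ a * Φ x₂ y₂ ^ b ≤ Φ (a • x₁ + b • x₂) (a • y₁ + b • y₂) := by
    have := hpos x₁ y₁
    have := hpos x₂ y₂
    rw [← Real.log_le_log_iff (by positivity) (hpos _ _), log_rpow_mul_rpow (hpos _ _) (hpos _ _)]
    exact hlog.2 (mem_univ (x₁, y₁)) (mem_univ (x₂, y₂)) ha.le hb.le hab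
  have hPL : (∫ y, Φ x₁ y ∂μ) ^ a * (∫ y, Φ x₂ y ∂μ) ^ b ≤ ∫ y, Φ (a • x₁ + b • x₂) y ∂μ := by
    have := hIpos x₁
    rw [← ENNReal.ofReal_le_ofReal_iff (hIpos _).le, ENNReal.ofReal_mul (by positivity),
      ← ENNReal.ofReal_rpow_of_pos (hIpos _), ← ENNReal.ofReal_rpow_of_pos (hIpos _), hI, hI, hI]
    refine hμ ha hb hab (hmeas _).ennreal_ofReal (hmeas _).ennreal_ofReal
      (hmeas _).ennreal_ofReal fun y₁ y₂ ↦ ?_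
    have := hpos x₁ y₁
    rw [ENNReal.ofReal_rpow_of_pos (hpos _ _), ENNReal.ofReal_rpow_of_pos (hpos _ _),
      ← ENNReal.ofReal_mul (by positivity)]
    exact ENNReal.ofReal_le_ofReal (hΦ y₁ y₂)
  simpa only [log_rpow_mul_rpow (hIpos _) (hIpos _), smul_eq_mul] using
    Real.log_le_log (by have := hIpos x₁; have := hIpos x₂; positivity) hPL

section StrictConcavity

theorem strictAnti_of_antitone_of_analyticOnNhd {f : ℝ → ℝ} (hf : Antitone f)
    (han : AnalyticOnNhd ℝ f univ) (hne : ∀ c, f ≠ fun _ ↦ c) : StrictAnti f := by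
  intro x y hxy
  refine (hf hxy.le).lt_of_ne fun heq ↦ hne (f x) ?_
  obtain ⟨z, hxz, hzy⟩ := exists_between hxy
  refine han.eq_of_eventuallyEq analyticOnNhd_const (z₀ := z) ?_
  filter_upwards [Ioo_mem_nhds hxz hzy] with s hs
  exact le_antisymm (hf hs.1.le) (heq ▸ hf hs.2.le)

theorem strictConcaveOn_of_analyticOnNhd_of_tendsto_atBot {f : ℝ → ℝ}
    (hf : ConcaveOn ℝ univ f) (han : AnalyticOnNhd ℝ f univ)
    (hlim : Tendsto f (cocompact ℝ) atBot) : StrictConcaveOn ℝ univ f := by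
  have hdiff : Differentiable ℝ f := fun x ↦ (han x (mem_univ x)).differentiableAt
  have hderiv : Antitone (deriv f) :=
    antitoneOn_univ.1 (hf.antitoneOn_deriv fun x _ ↦ hdiff x)
  refine (strictAnti_of_antitone_of_analyticOnNhd hderiv han.deriv
    fun c hc ↦ ?_).strictConcaveOn_univ_of_deriv hdiff.continuous
  obtain ⟨x, hx⟩ := hdiff.continuous.exists_forall_ge hlim
  have hc₀ : c = 0 := by
    rw [← congrFun hc x]
    exact IsLocalMax.deriv_eq_zero (Eventually.of_forall hx)
  have hconst (y : ℝ) : f y = f x :=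
    is_const_of_deriv_eq_zero hdiff (fun z ↦ (congrFun hc z).trans hc₀) y x
  exact not_tendsto_const_atBot (f x) (cocompact ℝ) (hlim.congr hconst)

theorem strictConcaveOn_univ_of_comp_lineMap {E : Type*} [AddCommGroup E] [Module ℝ E]
    {f : E → ℝ} (hf : ∀ x y, x ≠ y → StrictConcaveOn ℝ univ (f ∘ AffineMap.lineMap (k := ℝ) x y)) :
    StrictConcaveOn ℝ univ f := by
  refine ⟨convex_univ, fun x _ y _ hxy a b ha hb hab ↦ ?_⟩
  have h := (hf x y hxy).2 (mem_univ 0) (mem_univ 1) zero_ne_one ha hb hab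
  obtain rfl : a = 1 - b := by linarith
  simpa [AffineMap.lineMap_apply_module] using h

end StrictConcavity

theorem analyticOnNhd_integral_mul_exp {α : Type*} [MeasurableSpace α] {μ : Measure α}
    {w X : α → ℝ} (hw : Measurable w) (hw₀ : ∀ y, 0 ≤ w y)
    (hint : ∀ s, Integrable (fun y ↦ w y * Real.exp (s * X y)) μ) :
    AnalyticOnNhd ℝ (fun s ↦ ∫ y, w y * Real.exp (s * X y) ∂μ) univ := by
  set ν := μ.withDensity fun y ↦ ENNReal.ofReal (w y)
  have htop : ∀ᵐ y ∂μ, ENNReal.ofReal (w y) < ∞ := ae_of_all _ fun _ ↦ ENNReal.ofReal_lt_top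
  have hset : integrableExpSet X ν = univ := by
    refine eq_univ_of_forall fun s ↦ ?_
    refine (integrable_withDensity_iff hw.ennreal_ofReal htop).2 ?_
    simpa only [ENNReal.toReal_ofReal (hw₀ _), mul_comm] using hint s
  have hmgf : (fun s ↦ ∫ y, w y * Real.exp (s * X y) ∂μ) = mgf X ν := by
    ext s
    rw [mgf, integral_withDensity_eq_integral_toReal_smul hw.ennreal_ofReal htop]
    simp only [ENNReal.toReal_ofReal (hw₀ _), smul_eq_mul]
  rw [hmgf]
  exact fun s _ ↦ analyticAt_mgf (by simp [hset])

theorem tendsto_integral_comp_sub_cobounded {E : Type*} [NormedAddCommGroup E]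
    [MeasurableSpace E] [BorelSpace E] {μ : Measure E} [IsFiniteMeasure μ] {K : E → ℝ}
    (hK : Measurable K) {C : ℝ} (hC : ∀ z, ‖K z‖ ≤ C)
    (hlim : Tendsto K (cobounded E) (𝓝 0)) :
    Tendsto (fun x ↦ ∫ y, K (x - y) ∂μ) (cobounded E) (𝓝 0) := by
  have : (cobounded E).IsCountablyGenerated := by
    rw [← comap_norm_atTop]
    infer_instance
  have h := tendsto_integral_filter_of_dominated_convergence (μ := μ) (fun _ ↦ C)
    (F := fun x y ↦ K (x - y)) (l := cobounded E) (f := fun _ ↦ 0)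
    (Eventually.of_forall fun x ↦ (by fun_prop : Measurable fun y ↦ K (x - y)).aestronglyMeasurable)
    (Eventually.of_forall fun x ↦ ae_of_all _ fun y ↦ hC _) (integrable_const C)
    (ae_of_all _ fun y ↦ hlim.comp (tendsto_sub_const_cobounded y))
  simpa only [integral_zero] using h

section HeatKernel

variable {m : ℕ} {t : ℝ}

theorem continuous_heatKernel (m : ℕ) (t : ℝ) : Continuous fun z ↦ heatKernel m z t := by
  unfold heatKernel
  fun_prop

theorem heatKernel_pos (ht : 0 < t) (z : EuclideanSpace ℝ (Fin m)) : 0 < heatKernel m z t := by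
  unfold heatKernel
  positivity

theorem norm_heatKernel_le (ht : 0 < t) (z : EuclideanSpace ℝ (Fin m)) :
    ‖heatKernel m z t‖ ≤ (4 * Real.pi * t) ^ (-(m : ℝ) / 2) := by
  rw [Real.norm_of_nonneg (heatKernel_pos ht z).le]
  refine mul_le_of_le_one_right (by positivity) (Real.exp_le_one_iff.2 ?_)
  exact div_nonpos_of_nonpos_of_nonneg (neg_nonpos.2 (sq_nonneg _)) (by positivity)

theorem tendsto_heatKernel_cobounded (m : ℕ) (ht : 0 < t) :
    Tendsto (fun z ↦ heatKernel m z t) (cobounded _) (𝓝 0) := by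
  have hexp : Tendsto (fun z : EuclideanSpace ℝ (Fin m) ↦ -‖z‖ ^ 2 / (4 * t))
      (cobounded _) atBot :=
    (tendsto_neg_atTop_atBot.comp ((tendsto_pow_atTop two_ne_zero).comp
      tendsto_norm_cobounded_atTop)).atBot_div_const (by positivity)
  simpa only [heatKernel, mul_zero, Function.comp_apply] using
    (Real.tendsto_exp_atBot.comp hexp).const_mul ((4 * Real.pi * t) ^ (-(m : ℝ) / 2))

theorem concaveOn_log_heatKernel (m : ℕ) (ht : 0 < t) :
    ConcaveOn ℝ univ fun z ↦ Real.log (heatKernel m z t) := by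
  have hlog (z : EuclideanSpace ℝ (Fin m)) : Real.log (heatKernel m z t) =
      -((4 * t)⁻¹ * ‖z‖ ^ 2) + Real.log ((4 * Real.pi * t) ^ (-(m : ℝ) / 2)) := by
    rw [heatKernel, Real.log_mul (by positivity) (Real.exp_ne_zero _), Real.log_exp]
    ring
  simp only [hlog]
  exact ((convexOn_univ_norm.pow (fun z _ ↦ norm_nonneg z) 2).smul
    (by positivity : 0 ≤ (4 * t)⁻¹)).neg.add_const _

theorem heatKernel_add_smul (z v : EuclideanSpace ℝ (Fin m)) (s t : ℝ) :
    heatKernel m (z + s • v) t = Real.exp (-(s ^ 2 * ‖v‖ ^ 2) / (4 * t)) *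
      (heatKernel m z t * Real.exp (s * (-inner ℝ z v / (2 * t)))) := by
  have hexp : -‖z + s • v‖ ^ 2 / (4 * t) = -(s ^ 2 * ‖v‖ ^ 2) / (4 * t) +
      (-‖z‖ ^ 2 / (4 * t) + s * (-inner ℝ z v / (2 * t))) := by
    rw [norm_add_sq_real, norm_smul, mul_pow, Real.norm_eq_abs, sq_abs, real_inner_smul_right]
    ring
  rw [heatKernel, heatKernel, hexp, Real.exp_add, Real.exp_add]
  ring

end HeatKernel

/-- The solution at time `t` of the heat equation on `ℝ^m` with initial datum the measure `μ`.
The initial datum `volume.restrict Ω` gives `W_Ω`. -/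
def heatFlow {m : ℕ} (μ : Measure (EuclideanSpace ℝ (Fin m))) (t : ℝ)
    (x : EuclideanSpace ℝ (Fin m)) : ℝ :=
  ∫ y, heatKernel m (x - y) t ∂μ

section HeatFlow

variable {m : ℕ} {t : ℝ} {μ : Measure (EuclideanSpace ℝ (Fin m))} [IsFiniteMeasure μ]

theorem integrable_heatKernel_sub (ht : 0 < t) (x : EuclideanSpace ℝ (Fin m)) :
    Integrable (fun y ↦ heatKernel m (x - y) t) μ :=
  have hcont : Continuous fun y ↦ heatKernel m (x - y) t :=
    (continuous_heatKernel m t).comp (continuous_const.sub continuous_id)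
  .of_bound hcont.aestronglyMeasurable _ (ae_of_all _ fun _ ↦ norm_heatKernel_le ht _)

theorem heatFlow_pos [NeZero μ] (ht : 0 < t) (x : EuclideanSpace ℝ (Fin m)) :
    0 < heatFlow μ t x :=
  integral_pos_of_forall_pos (fun _ ↦ heatKernel_pos ht _) (integrable_heatKernel_sub ht x)

theorem tendsto_heatFlow_cobounded (ht : 0 < t) :
    Tendsto (heatFlow μ t) (cobounded _) (𝓝 0) :=
  tendsto_integral_comp_sub_cobounded (continuous_heatKernel m t).measurable
    (norm_heatKernel_le ht) (tendsto_heatKernel_cobounded m ht)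

theorem concaveOn_log_heatFlow [NeZero μ] (hμ : PrekopaLeindler μ) (ht : 0 < t) :
    ConcaveOn ℝ univ fun x ↦ Real.log (heatFlow μ t x) := by
  have hlog := (concaveOn_log_heatKernel m ht).comp_linearMap
    (LinearMap.fst ℝ (EuclideanSpace ℝ (Fin m)) (EuclideanSpace ℝ (Fin m)) - LinearMap.snd ℝ _ _)
  exact hμ.concaveOn_log_integral (fun _ _ ↦ heatKernel_pos ht _)
    (fun _ ↦ (continuous_heatKernel m t).measurable.comp (measurable_const.sub measurable_id))
    (integrable_heatKernel_sub ht) hlog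

theorem analyticOnNhd_heatFlow_comp_lineMap (ht : 0 < t) (x₁ x₂ : EuclideanSpace ℝ (Fin m)) :
    AnalyticOnNhd ℝ (heatFlow μ t ∘ AffineMap.lineMap (k := ℝ) x₁ x₂) univ := by
  set v := x₂ - x₁
  set w := fun y ↦ heatKernel m (x₁ - y) t
  set X := fun y ↦ -inner ℝ (x₁ - y) v / (2 * t)
  have hkernel (s : ℝ) (y : EuclideanSpace ℝ (Fin m)) :
      heatKernel m (AffineMap.lineMap x₁ x₂ s - y) t =
        Real.exp (-(s ^ 2 * ‖v‖ ^ 2) / (4 * t)) * (w y * Real.exp (s * X y)) := by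
    rw [← heatKernel_add_smul, AffineMap.lineMap_apply_module']
    congr 1
    abel
  have hint (s : ℝ) : Integrable (fun y ↦ w y * Real.exp (s * X y)) μ := by
    have h := integrable_heatKernel_sub (μ := μ) ht (AffineMap.lineMap x₁ x₂ s)
    simp only [hkernel] at h
    exact (integrable_const_mul_iff (Real.exp_ne_zero _).isUnit _).1 h
  have hfactor : heatFlow μ t ∘ AffineMap.lineMap x₁ x₂ = fun s : ℝ ↦
      Real.exp (-(s ^ 2 * ‖v‖ ^ 2) / (4 * t)) * ∫ y, w y * Real.exp (s * X y) ∂μ := by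
    ext s
    simp only [Function.comp_apply, heatFlow, hkernel, integral_const_mul]
  rw [hfactor]
  refine AnalyticOnNhd.mul (fun s _ ↦ by fun_prop) (analyticOnNhd_integral_mul_exp ?_
    (fun y ↦ (heatKernel_pos ht _).le) hint)
  exact (continuous_heatKernel m t).measurable.comp (measurable_const.sub measurable_id)

theorem tendsto_log_heatFlow_comp_lineMap [NeZero μ] (ht : 0 < t)
    {x₁ x₂ : EuclideanSpace ℝ (Fin m)} (hx : x₁ ≠ x₂) :
    Tendsto ((fun x ↦ Real.log (heatFlow μ t x)) ∘ AffineMap.lineMap (k := ℝ) x₁ x₂)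
      (cocompact ℝ) atBot := by
  have hline : Tendsto (AffineMap.lineMap (k := ℝ) x₁ x₂) (cocompact ℝ) (cobounded _) := by
    rw [← Metric.cobounded_eq_cocompact]
    exact (antilipschitzWith_lineMap hx).tendsto_cobounded
  have hflow : Tendsto (heatFlow μ t) (cobounded _) (𝓝[>] 0) :=
    tendsto_nhdsWithin_iff.2
      ⟨tendsto_heatFlow_cobounded ht, Eventually.of_forall fun x ↦ heatFlow_pos ht x⟩
  exact (Real.tendsto_log_nhdsGT_zero.comp hflow).comp hline

theorem strictConcaveOn_log_heatFlow [NeZero μ] (hμ : PrekopaLeindler μ) (ht : 0 < t) :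
    StrictConcaveOn ℝ univ fun x ↦ Real.log (heatFlow μ t x) :=
  strictConcaveOn_univ_of_comp_lineMap fun x₁ x₂ hx ↦
    strictConcaveOn_of_analyticOnNhd_of_tendsto_atBot
      ((concaveOn_log_heatFlow hμ ht).comp_affineMap (AffineMap.lineMap x₁ x₂))
      (fun s hs ↦ (analyticOnNhd_heatFlow_comp_lineMap ht x₁ x₂ s hs).log (heatFlow_pos ht _))
      (tendsto_log_heatFlow_comp_lineMap ht hx)

end HeatFlow

theorem stmt12_general {m : ℕ} (μ : Measure (EuclideanSpace ℝ (Fin m))) [IsFiniteMeasure μ]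
    [NeZero μ] (hμ : PrekopaLeindler μ) (t : ℝ) (ht : 0 < t) :
    (∀ x : EuclideanSpace ℝ (Fin m), 0 < ∫ y, heatKernel m (x - y) t ∂μ) ∧
    (∀ x₁ x₂ : EuclideanSpace ℝ (Fin m), x₁ ≠ x₂ → ∀ l : ℝ, 0 < l → l < 1 →
      (∫ y, heatKernel m (x₁ - y) t ∂μ) ^ (1 - l) *
        (∫ y, heatKernel m (x₂ - y) t ∂μ) ^ l <
      ∫ y, heatKernel m ((1 - l) • x₁ + l • x₂ - y) t ∂μ) := by
  have hpos (x : EuclideanSpace ℝ (Fin m)) : 0 < heatFlow μ t x := heatFlow_pos ht x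
  refine ⟨hpos, fun x₁ x₂ hx l hl₀ hl₁ ↦ ?_⟩
  change heatFlow μ t x₁ ^ (1 - l) * heatFlow μ t x₂ ^ l <
    heatFlow μ t ((1 - l) • x₁ + l • x₂)
  have := hpos x₁
  have := hpos x₂
  rw [← Real.log_lt_log_iff (by positivity) (hpos _), log_rpow_mul_rpow (hpos _) (hpos _)]
  exact (strictConcaveOn_log_heatFlow hμ ht).2 (mem_univ x₁) (mem_univ x₂) hx (sub_pos.2 hl₁) hl₀
    (sub_add_cancel 1 l)

theorem stmt12 {m : ℕ} (Ω : Set (EuclideanSpace ℝ (Fin m)))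
    (hconv : Convex ℝ Ω) (hcomp : IsCompact Ω) (hint : (interior Ω).Nonempty)
    (t : ℝ) (ht : 0 < t) :
    (∀ x : EuclideanSpace ℝ (Fin m), 0 < ∫ y in Ω, heatKernel m (x - y) t) ∧
    (∀ x₁ x₂ : EuclideanSpace ℝ (Fin m), x₁ ≠ x₂ → ∀ l : ℝ, 0 < l → l < 1 →
      (∫ y in Ω, heatKernel m (x₁ - y) t) ^ (1 - l) *
        (∫ y in Ω, heatKernel m (x₂ - y) t) ^ l <
      ∫ y in Ω, heatKernel m ((1 - l) • x₁ + l • x₂ - y) t) := by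
  have : Fact (volume Ω < ∞) := ⟨hcomp.measure_lt_top⟩
  have : NeZero (volume.restrict Ω) :=
    ⟨Measure.restrict_eq_zero.not.2 (Measure.measure_pos_of_nonempty_interior _ hint).ne'⟩
  exact stmt12_general _
    ((prekopaLeindler_volume_euclideanSpace m).restrict hconv hcomp.measurableSet) t ht
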